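/- Let B be a reflexive real Banach space. Then every nonempty, closed, and convex subset C of B is generalized proximal for Π_C: for every x ∈ B, the set Π_C(x) is nonempty. -/

import Mathlib

open Set Filter

noncomputable section

/-- The normalized duality map `J x = {φ : ⟨φ,x⟩ = ‖x‖² and ‖φ‖ = ‖x‖}`. -/
def dualityMap {B : Type*} [NormedAddCommGroup B] [NormedSpace ℝ B] (x : B) :
    Set (B →L[ℝ] ℝ) :=
  {φ | φ x = ‖x‖ ^ 2 ∧ ‖φ‖ = ‖x‖}

/-- The Lyapunov functional `V(φ,x) = ‖φ‖² - 2⟨φ,x⟩ + ‖x‖²`. -/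
def lyapV {B : Type*} [NormedAddCommGroup B] [NormedSpace ℝ B] (φ : B →L[ℝ] ℝ) (x : B) : ℝ :=
  ‖φ‖ ^ 2 - 2 * φ x + ‖x‖ ^ 2

/-- The generalized projection: the set of minimizers of `V(φ, ·)` over `C`. -/
def genProj {B : Type*} [NormedAddCommGroup B] [NormedSpace ℝ B] (C : Set B)
    (φ : B →L[ℝ] ℝ) : Set B :=
  {u | u ∈ C ∧ ∀ y ∈ C, lyapV φ u ≤ lyapV φ y}

/-- The generalized metric projection `Π_C x = ⋃_{jx ∈ J x} π_C (jx)`. -/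
def genMetricProj {B : Type*} [NormedAddCommGroup B] [NormedSpace ℝ B] (C : Set B) (x : B) :
    Set B :=
  ⋃ φ ∈ dualityMap x, genProj C φ

/-- The metric projection: the set of nearest points to `x` in `C`. -/
def metricProj {B : Type*} [NormedAddCommGroup B] [NormedSpace ℝ B] (C : Set B) (x : B) :
    Set B :=
  {u | u ∈ C ∧ ∀ y ∈ C, ‖x - u‖ ≤ ‖x - y‖}

/-- The set of generalized identical points of `x`. -/
def genIdentical {B : Type*} [NormedAddCommGroup B] [NormedSpace ℝ B] (x : B) : Set B :=
  {y | (dualityMap x ∩ dualityMap y).Nonempty}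

theorem dualityMap_nonempty {B : Type*} [NormedAddCommGroup B] [NormedSpace ℝ B] (x : B) :
    (dualityMap x).Nonempty := by
  by_cases hx : ‖x‖ = 0
  · exact ⟨0, by simp [hx], by simp [hx]⟩
  · obtain ⟨g, hg, hgx⟩ := exists_dual_vector ℝ x hx
    refine ⟨‖x‖ • g, ?_, by simp [norm_smul, hg]⟩
    simp [hgx, sq]

theorem Convex.isClosed_toWeakSpace_image {B : Type*} [NormedAddCommGroup B] [NormedSpace ℝ B]
    {s : Set B} (hs : Convex ℝ s) (hc : IsClosed s) : IsClosed (toWeakSpace ℝ B '' s) := by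
  rw [← closure_eq_iff_isClosed, ← hs.toWeakSpace_closure ℝ, hc.closure_eq]

/-- In a reflexive space, bounded closed convex sets are weakly compact. -/
theorem Convex.isCompact_toWeakSpace_image {B : Type*} [NormedAddCommGroup B] [NormedSpace ℝ B]
    (hrefl : Function.Surjective (NormedSpace.inclusionInDoubleDual ℝ B))
    {s : Set B} (hs : Convex ℝ s) (hc : IsClosed s) (hb : Bornology.IsBounded s) :
    IsCompact (toWeakSpace ℝ B '' s) := by
  rw [← (hs.isClosed_toWeakSpace_image hc).closure_eq]
  refine NormedSpace.isCompact_closure_of_isBounded ℝ B _ ?_ fun ψ _ => ?_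
  · rwa [preimage_image_eq _ (toWeakSpace ℝ B).injective]
  · obtain ⟨b, hb⟩ := hrefl (StrongDual.toWeakDual.symm ψ)
    refine ⟨toWeakSpace ℝ B b, ?_⟩
    rw [NormedSpace.inclusionInDoubleDualWeak_apply]
    simp [hb]

/-- In a reflexive space, a continuous convex function with bounded sublevel sets attains its
minimum on every nonempty closed convex set. -/
theorem ConvexOn.exists_isMinOn_of_reflexive {B : Type*} [NormedAddCommGroup B] [NormedSpace ℝ B]
    (hrefl : Function.Surjective (NormedSpace.inclusionInDoubleDual ℝ B))
    {f : B → ℝ} (hf : ConvexOn ℝ univ f) (hcont : Continuous f)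
    (hbdd : ∀ r, Bornology.IsBounded {y | f y ≤ r})
    {C : Set B} (hC : C.Nonempty) (hclosed : IsClosed C) (hconv : Convex ℝ C) :
    ∃ u ∈ C, IsMinOn f C u := by
  obtain ⟨c, hc⟩ := hC
  have hsub (r : ℝ) : Convex ℝ {y | f y ≤ r} := by simpa using hf.convex_le r
  have hsub_closed (r : ℝ) : IsClosed {y | f y ≤ r} := isClosed_le hcont continuous_const
  have hcompact : IsCompact (toWeakSpace ℝ B '' (C ∩ {y | f y ≤ f c})) :=
    (hconv.inter (hsub _)).isCompact_toWeakSpace_image hrefl (hclosed.inter (hsub_closed _))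
      ((hbdd _).subset inter_subset_right)
  have hlsc : LowerSemicontinuous (f ∘ (toWeakSpace ℝ B).symm) := by
    rw [lowerSemicontinuous_iff_isClosed_preimage]
    intro r
    convert (hsub r).isClosed_toWeakSpace_image (hsub_closed r) using 1
    exact ((toWeakSpace ℝ B).toEquiv.image_eq_preimage_symm {y | f y ≤ r}).symm
  have hne : (C ∩ {y | f y ≤ f c}).Nonempty := ⟨c, hc, le_refl (f c)⟩
  obtain ⟨_, ⟨u, ⟨huC, huc⟩, rfl⟩, hmin⟩ :=
    (hlsc.lowerSemicontinuousOn _).exists_isMinOn (hne.image _) hcompact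
  refine ⟨u, huC, fun y hy => ?_⟩
  rcases le_total (f y) (f c) with h | h
  · simpa using hmin ⟨y, ⟨hy, h⟩, rfl⟩
  · exact le_trans huc h

theorem continuous_lyapV {B : Type*} [NormedAddCommGroup B] [NormedSpace ℝ B] (φ : B →L[ℝ] ℝ) :
    Continuous (lyapV φ) := by
  unfold lyapV
  fun_prop

theorem convexOn_lyapV {B : Type*} [NormedAddCommGroup B] [NormedSpace ℝ B] (φ : B →L[ℝ] ℝ) :
    ConvexOn ℝ univ (lyapV φ) := by
  have hsq : ConvexOn ℝ univ fun y : B => ‖y‖ ^ 2 :=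
    convexOn_univ_norm.pow (fun _ _ => norm_nonneg _) 2
  have hlin : ConvexOn ℝ univ ((-2 : ℝ) • φ : B →L[ℝ] ℝ) :=
    ((-2 : ℝ) • φ).toLinearMap.convexOn convex_univ
  refine ((hlin.add hsq).add_const (‖φ‖ ^ 2)).congr fun y _ => ?_
  simp only [lyapV, Pi.add_apply, smul_apply, smul_eq_mul]
  ring

theorem isBounded_lyapV_le {B : Type*} [NormedAddCommGroup B] [NormedSpace ℝ B]
    (φ : B →L[ℝ] ℝ) (r : ℝ) : Bornology.IsBounded {y | lyapV φ y ≤ r} := by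
  refine isBounded_iff_forall_norm_le.2 ⟨‖φ‖ + r + 1, fun y hy => ?_⟩
  have hφ : φ y ≤ ‖φ‖ * ‖y‖ := (le_abs_self _).trans (φ.le_opNorm y)
  simp only [mem_ofPred_eq, lyapV] at hy
  nlinarith [sq_nonneg (‖y‖ - ‖φ‖ - 1)]

theorem statement_9 {B : Type*} [NormedAddCommGroup B] [NormedSpace ℝ B] [CompleteSpace B]
    (hrefl : Function.Surjective ⇑(NormedSpace.inclusionInDoubleDual ℝ B))
    (C : Set B) (hC : C.Nonempty) (hclosed : IsClosed C) (hconv : Convex ℝ C)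
    (x : B) : (genMetricProj C x).Nonempty := by
  obtain ⟨φ, hφ⟩ := dualityMap_nonempty x
  obtain ⟨u, hu, hmin⟩ := (convexOn_lyapV φ).exists_isMinOn_of_reflexive hrefl
    (continuous_lyapV φ) (isBounded_lyapV_le φ) hC hclosed hconv
  exact ⟨u, mem_biUnion hφ ⟨hu, fun y hy => hmin hy⟩⟩
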